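/- arXiv:2507.07076 — 3 statements merged into one kernel-verified Lean document; each statement's English description precedes it below -/
import Mathlib

section
/- Let Γ₁ and Γ₂ be connected simple graphs with graph metrics d₁ and d₂, each of bounded valence (i.e. all vertex degrees bounded by a fixed constant). Let φ: V(Γ₁) → V(Γ₂) be a quasiisometry with respect to d₁ and d₂, i.e. a k-quasiisometric embedding for some k ≥ 1 whose image is k-dense in (V(Γ₂), d₂). Then Γ₁ has exponential growth if and only if Γ₂ has exponential growth. -/
/-- A graph has exponential growth: for some `a > 0` and `b > 1`, every ball
of radius `n ≥ 1` around every vertex contains at least `a·bⁿ` vertices. -/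
def HasExpGrowth {V : Type*} (G : SimpleGraph V) : Prop :=
  ∃ a b : ℝ, 0 < a ∧ 1 < b ∧
    ∀ (u : V) (n : ℕ), 1 ≤ n → a * b ^ n ≤ ({v : V | G.dist u v ≤ n}.ncard : ℝ)

/-!
In a connected graph of valence at most `D` a ball of radius `n` has at most `(D + 1) ^ n` vertices.
The fibres of a quasiisometry `f` lie in balls of fixed radius, so they have at most `M` elements
for some uniform `M`, and `f` maps balls of radius `n` into balls of radius linear in `n`. Hence
`|B(u, n)| ≤ M * |B(v, p * n + q)|` whenever `f u` is near `v`, and exponential growth with base `b`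
of the source gives exponential growth with base `b ^ (1 / p)` of the target. A quasi-inverse of `f`
is again a quasiisometry, which gives the converse.
-/

open Set

theorem encard_biUnion_le_encard_mul {ι α : Type*} {t : Set ι} {s : ι → Set α} {c : ℕ∞}
    (hs : ∀ i ∈ t, (s i).encard ≤ c) : (⋃ i ∈ t, s i).encard ≤ t.encard * c := by
  obtain rfl | hc := eq_or_ne c 0
  · simpa using hs
  obtain ht | ht := t.finite_or_infinite.symm
  · simp [ht.encard_eq, ENat.top_mul hc]
  lift t to Finset ι using ht
  calc (⋃ i ∈ t, s i).encard ≤ ∑ i ∈ t, (s i).encard := t.set_encard_biUnion_le s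
    _ ≤ t.card • c := Finset.sum_le_card_nsmul t _ c hs
    _ = (t : Set ι).encard * c := by rw [encard_coe_eq_coe_finsetCard, nsmul_eq_mul]

theorem encard_le_encard_mul_of_mapsTo {α β : Type*} {f : α → β} {s : Set α} {t : Set β}
    (hf : MapsTo f s t) {c : ℕ∞} (hc : ∀ y ∈ t, (f ⁻¹' {y}).encard ≤ c) :
    s.encard ≤ t.encard * c :=
  have hs : s ⊆ ⋃ y ∈ t, f ⁻¹' {y} := fun _ hx ↦ mem_biUnion (hf hx) rfl
  (encard_le_encard hs).trans (encard_biUnion_le_encard_mul hc)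

/-- The closed ball of radius `n` around `u` for `SimpleGraph.dist`, as it occurs in `HasExpGrowth`.
(Mathlib's `SimpleGraph.ball` is the open ball for the extended distance.) -/
def distClosedBall {V : Type*} (G : SimpleGraph V) (u : V) (n : ℕ) : Set V :=
  {v | G.dist u v ≤ n}

/-- `f` is a `k`-quasiisometry from `G` to `H`: a `k`-quasiisometric embedding for the graph metrics
whose image is `k`-dense. -/
structure IsQuasiIsometry {V W : Type*} (G : SimpleGraph V) (H : SimpleGraph W) (f : V → W)
    (k : ℝ) : Prop where
  one_le : 1 ≤ k
  le_dist_map : ∀ x y, (1 / k) * (G.dist x y : ℝ) - k ≤ H.dist (f x) (f y)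
  dist_map_le : ∀ x y, (H.dist (f x) (f y) : ℝ) ≤ k * G.dist x y + k
  dense : ∀ w, ∃ x, (H.dist (f x) w : ℝ) ≤ k

section Graphs

variable {V W : Type*} {G : SimpleGraph V} {H : SimpleGraph W}

section Ball

theorem distClosedBall_mono (u : V) {m n : ℕ} (hmn : m ≤ n) :
    distClosedBall G u m ⊆ distClosedBall G u n :=
  fun _ hv ↦ le_trans hv hmn

theorem self_mem_distClosedBall (u : V) (n : ℕ) : u ∈ distClosedBall G u n :=
  SimpleGraph.dist_self.trans_le n.zero_le

theorem distClosedBall_zero (hG : G.Connected) (u : V) : distClosedBall G u 0 = {u} := by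
  ext v
  exact Nat.le_zero.trans (hG.dist_eq_zero_iff.trans eq_comm)

theorem distClosedBall_succ_subset (u : V) (n : ℕ) :
    distClosedBall G u (n + 1) ⊆ ⋃ w ∈ distClosedBall G u n, insert w (G.neighborSet w) := by
  intro v (hv : G.dist u v ≤ n + 1)
  by_cases hvn : G.dist u v ≤ n
  · exact mem_biUnion hvn (mem_insert v _)
  have hvu : G.Reachable v u := (SimpleGraph.Reachable.of_dist_ne_zero (by lia)).symm
  obtain ⟨p, hp⟩ := hvu.exists_walk_length_eq_dist
  cases p with
  | nil => simp at hvn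
  | @cons _ w _ hvw q =>
    have hw : G.dist u w ≤ n := by
      have hq : G.dist w u ≤ q.length := SimpleGraph.dist_le q
      rw [SimpleGraph.Walk.length_cons, SimpleGraph.dist_comm] at hp
      rw [SimpleGraph.dist_comm] at hq
      lia
    exact mem_biUnion hw (mem_insert_of_mem w hvw.symm)

theorem encard_distClosedBall_le (hG : G.Connected) {D : ℕ}
    (hD : ∀ v, (G.neighborSet v).encard ≤ D) (u : V) (n : ℕ) :
    (distClosedBall G u n).encard ≤ ((D + 1) ^ n : ℕ) := by
  induction n with
  | zero => simp [distClosedBall_zero hG]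
  | succ n ih =>
    have hnbhd (w : V) : (insert w (G.neighborSet w)).encard ≤ (D + 1 : ℕ) :=
      (encard_insert_le _ w).trans (by push_cast; gcongr; exact hD w)
    calc (distClosedBall G u (n + 1)).encard
        ≤ (⋃ w ∈ distClosedBall G u n, insert w (G.neighborSet w)).encard :=
          encard_le_encard (distClosedBall_succ_subset u n)
      _ ≤ (distClosedBall G u n).encard * (D + 1 : ℕ) :=
          encard_biUnion_le_encard_mul fun w _ ↦ hnbhd w
      _ ≤ ((D + 1) ^ n : ℕ) * (D + 1 : ℕ) := by gcongr
      _ = ((D + 1) ^ (n + 1) : ℕ) := by rw [pow_succ, Nat.cast_mul]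

theorem finite_distClosedBall (hG : G.Connected) {D : ℕ}
    (hD : ∀ v, (G.neighborSet v).encard ≤ D) (u : V) (n : ℕ) : (distClosedBall G u n).Finite :=
  finite_of_encard_le_coe (encard_distClosedBall_le hG hD u n)

end Ball

section Growth

theorem hasExpGrowth_of_forall_ge (hfin : ∀ u n, (distClosedBall G u n).Finite) {a b : ℝ}
    (ha : 0 < a) (hb : 1 < b) (N : ℕ)
    (hN : ∀ u n, N ≤ n → a * b ^ n ≤ (distClosedBall G u n).ncard) : HasExpGrowth G := by
  refine ⟨min a (b ^ N)⁻¹, b, by positivity, hb, fun u n _ ↦ ?_⟩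
  change _ ≤ ((distClosedBall G u n).ncard : ℝ)
  rcases le_total N n with hNn | hnN
  · exact (mul_le_mul_of_nonneg_right (min_le_left _ _) (by positivity)).trans (hN u n hNn)
  · have hcard : 1 ≤ (distClosedBall G u n).ncard :=
      (ncard_pos (hfin u n)).2 ⟨u, self_mem_distClosedBall u n⟩
    calc min a (b ^ N)⁻¹ * b ^ n
        ≤ (b ^ N)⁻¹ * b ^ N :=
          mul_le_mul (min_le_right _ _) (pow_le_pow_right₀ hb.le hnN) (by positivity)
            (by positivity)
      _ = 1 := inv_mul_cancel₀ (by positivity)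
      _ ≤ (distClosedBall G u n).ncard := by exact_mod_cast hcard

theorem HasExpGrowth.of_ncard_distClosedBall_le (hG : HasExpGrowth G)
    (hfin : ∀ v n, (distClosedBall H v n).Finite) {M : ℝ} (hM : 0 < M) {p q : ℕ} (hp : 0 < p)
    (hle : ∀ v, ∃ u, ∀ n,
      ((distClosedBall G u n).ncard : ℝ) ≤ M * (distClosedBall H v (p * n + q)).ncard) :
    HasExpGrowth H := by
  obtain ⟨a, b, ha, hb, hgrowth⟩ := hG
  obtain ⟨β, hβ, hβb⟩ : ∃ β : ℝ, 1 < β ∧ β ^ p = b :=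
    ⟨b ^ (p : ℝ)⁻¹, Real.one_lt_rpow hb (by positivity),
      Real.rpow_inv_natCast_pow (by positivity) hp.ne'⟩
  refine hasExpGrowth_of_forall_ge hfin (a := a / (M * β ^ (p + q))) (by positivity) hβ (p + q)
    fun v m hm ↦ ?_
  obtain ⟨u, hu⟩ := hle v
  -- `n` is the largest radius with `p * n + q ≤ m`.
  set n := (m - q) / p
  have hn : 1 ≤ n := (Nat.one_le_div_iff hp).2 (by lia)
  have hnm : p * n + q ≤ m := by
    have : p * n ≤ m - q := Nat.mul_div_le _ _
    lia
  have hmn : m ≤ p * n + (p + q) := by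
    have : m - q < p * (n + 1) := Nat.lt_mul_div_succ _ hp
    lia
  rw [div_mul_eq_mul_div, div_le_iff₀ (by positivity)]
  calc a * β ^ m ≤ a * β ^ (p * n + (p + q)) := by gcongr; exact hβ.le
    _ = a * b ^ n * β ^ (p + q) := by rw [pow_add, pow_mul, hβb, mul_assoc]
    _ ≤ (distClosedBall G u n).ncard * β ^ (p + q) := by gcongr; exact hgrowth u n hn
    _ ≤ M * (distClosedBall H v (p * n + q)).ncard * β ^ (p + q) := by gcongr; exact hu n
    _ ≤ M * (distClosedBall H v m).ncard * β ^ (p + q) := by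
        gcongr
        exacts [hfin v m, distClosedBall_mono v hnm]
    _ = (distClosedBall H v m).ncard * (M * β ^ (p + q)) := by ring

end Growth

namespace IsQuasiIsometry

variable {f : V → W} {k : ℝ}

theorem dist_le (hf : IsQuasiIsometry G H f k) (x y : V) :
    (G.dist x y : ℝ) ≤ k * H.dist (f x) (f y) + k ^ 2 := by
  have hk : 0 < k := one_pos.trans_le hf.one_le
  calc (G.dist x y : ℝ) = k * ((1 / k) * G.dist x y - k) + k ^ 2 := by field_simp; ring
    _ ≤ k * H.dist (f x) (f y) + k ^ 2 := by gcongr; exact hf.le_dist_map x y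

theorem encard_preimage_singleton_le (hf : IsQuasiIsometry G H f k) (hG : G.Connected) {D : ℕ}
    (hD : ∀ v, (G.neighborSet v).encard ≤ D) (w : W) :
    (f ⁻¹' {w}).encard ≤ ((D + 1) ^ ⌈k ^ 2⌉₊ : ℕ) := by
  rcases (f ⁻¹' {w}).eq_empty_or_nonempty with hempty | ⟨x, rfl⟩
  · simp [hempty]
  have hsub : f ⁻¹' {f x} ⊆ distClosedBall G x ⌈k ^ 2⌉₊ := by
    intro y (hy : f y = f x)
    have hxy : (G.dist x y : ℝ) ≤ k ^ 2 := by simpa [hy] using hf.dist_le x y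
    exact_mod_cast hxy.trans (Nat.le_ceil _)
  exact (encard_le_encard hsub).trans (encard_distClosedBall_le hG hD x _)

theorem mapsTo_distClosedBall (hf : IsQuasiIsometry G H f k) (hH : H.Connected) {u : V} {v : W}
    (huv : (H.dist (f u) v : ℝ) ≤ k) (n : ℕ) :
    MapsTo f (distClosedBall G u n) (distClosedBall H v (⌈k⌉₊ * n + 2 * ⌈k⌉₊)) := by
  intro x (hx : G.dist u x ≤ n)
  have hk : 0 ≤ k := zero_le_one.trans hf.one_le
  have htri : H.dist v (f x) ≤ H.dist (f u) v + H.dist (f u) (f x) := by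
    rw [H.dist_comm (u := f u) (v := v)]
    exact hH.dist_triangle
  have hdist : (H.dist v (f x) : ℝ) ≤ ⌈k⌉₊ * n + 2 * ⌈k⌉₊ :=
    calc (H.dist v (f x) : ℝ) ≤ H.dist (f u) v + H.dist (f u) (f x) := by exact_mod_cast htri
      _ ≤ k + (k * G.dist u x + k) := add_le_add huv (hf.dist_map_le u x)
      _ ≤ k + (k * n + k) := by gcongr
      _ = k * n + 2 * k := by ring
      _ ≤ ⌈k⌉₊ * n + 2 * ⌈k⌉₊ := by gcongr <;> exact Nat.le_ceil k
  exact_mod_cast hdist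

theorem hasExpGrowth (hf : IsQuasiIsometry G H f k) (hG : G.Connected) (hH : H.Connected)
    {D : ℕ} (hD : ∀ v, (G.neighborSet v).encard ≤ D)
    (hfin : ∀ w n, (distClosedBall H w n).Finite) (hgrowth : HasExpGrowth G) :
    HasExpGrowth H := by
  have hk : 0 < ⌈k⌉₊ := Nat.ceil_pos.2 (one_pos.trans_le hf.one_le)
  refine hgrowth.of_ncard_distClosedBall_le hfin (M := ((D + 1) ^ ⌈k ^ 2⌉₊ : ℕ))
    (q := 2 * ⌈k⌉₊) (by positivity) hk fun v ↦ ?_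
  obtain ⟨u, hu⟩ := hf.dense v
  refine ⟨u, fun n ↦ ?_⟩
  have hcard := encard_le_encard_mul_of_mapsTo (hf.mapsTo_distClosedBall hH hu n)
    fun w _ ↦ hf.encard_preimage_singleton_le hG hD w
  rw [← (finite_distClosedBall hG hD u n).cast_ncard_eq, ← (hfin v _).cast_ncard_eq,
    mul_comm] at hcard
  exact_mod_cast hcard

theorem exists_isQuasiIsometry_symm (hf : IsQuasiIsometry G H f k) (hH : H.Connected) :
    ∃ g : W → V, IsQuasiIsometry H G g (3 * k ^ 2) := by
  have hk := hf.one_le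
  have hksq : k ≤ k ^ 2 := le_self_pow₀ hk two_ne_zero
  have htri (x y z : W) : (H.dist x z : ℝ) ≤ H.dist x y + H.dist y z := by
    exact_mod_cast hH.dist_triangle
  choose g hg using hf.dense
  have hg' (w : W) : (H.dist w (f (g w)) : ℝ) ≤ k := by
    rw [H.dist_comm]
    exact hg w
  refine ⟨g, by linarith, fun v w ↦ ?_, fun v w ↦ ?_, fun x ↦ ⟨f x, ?_⟩⟩
  · have hvw : (H.dist v w : ℝ) ≤ k * G.dist (g v) (g w) + 3 * k := by
      linarith [htri v (f (g v)) w, htri (f (g v)) (f (g w)) w, hg' v, hg w,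
        hf.dist_map_le (g v) (g w)]
    rw [sub_le_iff_le_add, one_div, inv_mul_le_iff₀ (by positivity)]
    calc (H.dist v w : ℝ) ≤ k * G.dist (g v) (g w) + k * 3 := by linarith
      _ ≤ 3 * k ^ 2 * G.dist (g v) (g w) + 3 * k ^ 2 * (3 * k ^ 2) := by gcongr <;> nlinarith
      _ = 3 * k ^ 2 * (G.dist (g v) (g w) + 3 * k ^ 2) := by ring
  · have hfg : (H.dist (f (g v)) (f (g w)) : ℝ) ≤ H.dist v w + 2 * k := by
      linarith [htri (f (g v)) v (f (g w)), htri v w (f (g w)), hg v, hg' w]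
    calc (G.dist (g v) (g w) : ℝ) ≤ k * H.dist (f (g v)) (f (g w)) + k ^ 2 := hf.dist_le _ _
      _ ≤ k * (H.dist v w + 2 * k) + k ^ 2 := by gcongr
      _ = k * H.dist v w + 3 * k ^ 2 := by ring
      _ ≤ 3 * k ^ 2 * H.dist v w + 3 * k ^ 2 := by gcongr; linarith
  · calc (G.dist (g (f x)) x : ℝ) ≤ k * H.dist (f (g (f x))) (f x) + k ^ 2 := hf.dist_le _ _
      _ ≤ k * k + k ^ 2 := by gcongr; exact hg (f x)
      _ ≤ 3 * k ^ 2 := by linarith [sq_nonneg k]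

end IsQuasiIsometry

end Graphs

/-- Exponential growth of bounded-valence connected graphs is a
quasiisometry invariant. -/
theorem stmt3 {V₁ V₂ : Type*} (Γ₁ : SimpleGraph V₁) (Γ₂ : SimpleGraph V₂)
    (h₁ : Γ₁.Connected) (h₂ : Γ₂.Connected)
    (D₁ : ℕ) (hD₁ : ∀ v : V₁, (Γ₁.neighborSet v).Finite ∧ (Γ₁.neighborSet v).ncard ≤ D₁)
    (D₂ : ℕ) (hD₂ : ∀ v : V₂, (Γ₂.neighborSet v).Finite ∧ (Γ₂.neighborSet v).ncard ≤ D₂)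
    (φ : V₁ → V₂) (k : ℝ) (hk : 1 ≤ k)
    (hqi : ∀ x y : V₁,
        (1 / k) * (Γ₁.dist x y : ℝ) - k ≤ (Γ₂.dist (φ x) (φ y) : ℝ) ∧
        (Γ₂.dist (φ x) (φ y) : ℝ) ≤ k * (Γ₁.dist x y : ℝ) + k)
    (hdense : ∀ v : V₂, ∃ u : V₁, (Γ₂.dist (φ u) v : ℝ) ≤ k) :
    HasExpGrowth Γ₁ ↔ HasExpGrowth Γ₂ := by
  have hφ : IsQuasiIsometry Γ₁ Γ₂ φ k :=
    ⟨hk, fun x y ↦ (hqi x y).1, fun x y ↦ (hqi x y).2, hdense⟩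
  obtain ⟨ψ, hψ⟩ := hφ.exists_isQuasiIsometry_symm h₂
  have hval₁ (v : V₁) : (Γ₁.neighborSet v).encard ≤ D₁ :=
    encard_le_coe_iff_finite_ncard_le.2 (hD₁ v)
  have hval₂ (v : V₂) : (Γ₂.neighborSet v).encard ≤ D₂ :=
    encard_le_coe_iff_finite_ncard_le.2 (hD₂ v)
  exact ⟨hφ.hasExpGrowth h₁ h₂ hval₁ (finite_distClosedBall h₂ hval₂),
    hψ.hasExpGrowth h₂ h₁ hval₂ (finite_distClosedBall h₁ hval₁)⟩
end

section
/- Let δ ≥ 0 and C ≥ 0, and let X be a geodesic metric space whose geodesic triangles are δ-thin. Let x, y, z ∈ X with (x,z)_y ≤ C, let α be a geodesic from x to y and β a geodesic from y to z, and let γ: [0, d(x,y)+d(y,z)] → X be the arclength parametrization of the concatenation α·β (so γ(s) = α(s) for s ≤ d(x,y) and γ(s) = β(s − d(x,y)) afterwards). Then for all s, t in the domain, |s − t| − (2C + δ) ≤ d(γ(s), γ(t)) ≤ |s − t|. -/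
/-- Gromov product `(x,y)_p = ½(d(p,x)+d(p,y)−d(x,y))`. -/
noncomputable def gromovProd {X : Type*} [MetricSpace X] (p x y : X) : ℝ :=
  (dist p x + dist p y - dist x y) / 2

/-- `γ` is a geodesic from `x` to `y`, parametrized on `[0, dist x y]`. -/
def IsGeodesicFrom {X : Type*} [MetricSpace X] (γ : ℝ → X) (x y : X) : Prop :=
  γ 0 = x ∧ γ (dist x y) = y ∧
    ∀ s ∈ Set.Icc (0 : ℝ) (dist x y), ∀ t ∈ Set.Icc (0 : ℝ) (dist x y),
      dist (γ s) (γ t) = |s - t|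

/-- Every pair of points is joined by a geodesic. -/
def IsGeodesicSpace (X : Type*) [MetricSpace X] : Prop :=
  ∀ x y : X, ∃ γ : ℝ → X, IsGeodesicFrom γ x y

/-- Geodesic triangles are δ-thin. -/
def ThinTriangles (X : Type*) [MetricSpace X] (δ : ℝ) : Prop :=
  ∀ x y z : X, ∀ α β : ℝ → X, IsGeodesicFrom α y x → IsGeodesicFrom β y z →
    ∀ t : ℝ, 0 ≤ t → t ≤ gromovProd y x z → dist (α t) (β t) ≤ δ

/-!
If `p` lies on a geodesic from `x` to `y` and `q` on one from `y` to `z`, the triangle inequality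
gives `0 ≤ (p,q)_y ≤ (x,z)_y`. Along the concatenation, two parameters on the same side of the
corner are at distance exactly `|s - t|`, and two parameters on opposite sides, giving points `p`
and `q`, at distance exactly `|s - t| - 2 (p,q)_y`.
-/

/-- The concatenation `α · β` of two paths, switching from `α` to `β` at time `L`. At the switching
time itself it takes the value `α L`. -/
noncomputable def concatAt {X : Type*} (L : ℝ) (α β : ℝ → X) (s : ℝ) : X :=
  if s ≤ L then α s else β (s - L)

section Concat

variable {X : Type*} {L s : ℝ} {α β : ℝ → X}

theorem concatAt_of_le (hs : s ≤ L) : concatAt L α β s = α s :=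
  if_pos hs

theorem concatAt_of_ge (hL : α L = β 0) (hs : L ≤ s) : concatAt L α β s = β (s - L) := by
  rcases hs.eq_or_lt with rfl | hlt
  · rw [concatAt_of_le le_rfl, hL, sub_self]
  · exact if_neg hlt.not_ge

end Concat

section GromovProd

variable {X : Type*} [MetricSpace X] {p q x y z : X}

theorem gromovProd_nonneg : 0 ≤ gromovProd y p q :=
  div_nonneg (sub_nonneg.2 (dist_triangle_left p q y)) zero_le_two

theorem dist_eq_sub_two_mul_gromovProd (y p q : X) :
    dist p q = dist y p + dist y q - 2 * gromovProd y p q := by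
  unfold gromovProd
  ring

theorem gromovProd_le_of_dist_add_dist_eq (hp : dist y p + dist p x = dist y x)
    (hq : dist y q + dist q z = dist y z) : gromovProd y p q ≤ gromovProd y x z := by
  have hxz : dist x z ≤ dist p x + dist p q + dist q z := by
    simpa only [dist_comm x p] using dist_triangle4 x p q z
  unfold gromovProd
  linarith

end GromovProd

namespace IsGeodesicFrom

variable {X : Type*} [MetricSpace X] {x y z : X} {α β γ : ℝ → X} {s t u : ℝ}

theorem dist_left (h : IsGeodesicFrom γ x y) (hs : s ∈ Set.Icc 0 (dist x y)) :
    dist x (γ s) = s := by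
  have hdist := h.2.2 0 (Set.left_mem_Icc.2 dist_nonneg) s hs
  rwa [h.1, zero_sub, abs_neg, abs_of_nonneg hs.1] at hdist

theorem dist_right (h : IsGeodesicFrom γ x y) (hs : s ∈ Set.Icc 0 (dist x y)) :
    dist (γ s) y = dist x y - s := by
  have hdist := h.2.2 s hs (dist x y) (Set.right_mem_Icc.2 dist_nonneg)
  rwa [h.2.1, abs_sub_comm, abs_of_nonneg (sub_nonneg.2 hs.2)] at hdist

theorem dist_corner (hα : IsGeodesicFrom α x y) (hβ : IsGeodesicFrom β y z)
    (hs : s ∈ Set.Icc 0 (dist x y)) (hu : u ∈ Set.Icc 0 (dist y z)) :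
    dist (α s) (β u) = dist x y - s + u - 2 * gromovProd y (α s) (β u) := by
  rw [dist_eq_sub_two_mul_gromovProd y, dist_comm y, hα.dist_right hs, hβ.dist_left hu]

theorem gromovProd_corner_le (hα : IsGeodesicFrom α x y) (hβ : IsGeodesicFrom β y z)
    (hs : s ∈ Set.Icc 0 (dist x y)) (hu : u ∈ Set.Icc 0 (dist y z)) :
    gromovProd y (α s) (β u) ≤ gromovProd y x z := by
  apply gromovProd_le_of_dist_add_dist_eq
  · rw [dist_comm y, dist_comm _ x, dist_comm y, hα.dist_right hs, hα.dist_left hs,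
      sub_add_cancel]
  · rw [hβ.dist_left hu, hβ.dist_right hu, add_sub_cancel]

theorem dist_concatAt_mem_Icc_of_le (hα : IsGeodesicFrom α x y) (hβ : IsGeodesicFrom β y z)
    (hs : 0 ≤ s) (hst : s ≤ t) (ht : t ≤ dist x y + dist y z) :
    dist (concatAt (dist x y) α β s) (concatAt (dist x y) α β t) ∈
      Set.Icc (t - s - 2 * gromovProd y x z) (t - s) := by
  have hjoin : α (dist x y) = β 0 := hα.2.1.trans hβ.1.symm
  have hprod : 0 ≤ gromovProd y x z := gromovProd_nonneg
  have mem_of_eq {d : ℝ} (hd : d = |s - t|) :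
      d ∈ Set.Icc (t - s - 2 * gromovProd y x z) (t - s) := by
    rw [hd, abs_sub_comm, abs_of_nonneg (sub_nonneg.2 hst)]
    constructor <;> linarith
  rcases le_total t (dist x y) with htL | hLt
  · rw [concatAt_of_le (hst.trans htL), concatAt_of_le htL]
    exact mem_of_eq (hα.2.2 s ⟨hs, hst.trans htL⟩ t ⟨hs.trans hst, htL⟩)
  have htβ : t - dist x y ∈ Set.Icc 0 (dist y z) := ⟨sub_nonneg.2 hLt, sub_le_iff_le_add'.2 ht⟩
  rw [concatAt_of_ge hjoin hLt]
  rcases le_total s (dist x y) with hsL | hLs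
  · rw [concatAt_of_le hsL, hα.dist_corner hβ ⟨hs, hsL⟩ htβ]
    have hcorner_nonneg : 0 ≤ gromovProd y (α s) (β (t - dist x y)) := gromovProd_nonneg
    have hcorner_le := hα.gromovProd_corner_le hβ ⟨hs, hsL⟩ htβ
    constructor <;> linarith
  · have hsβ : s - dist x y ∈ Set.Icc 0 (dist y z) :=
      ⟨sub_nonneg.2 hLs, (sub_le_sub_right hst _).trans htβ.2⟩
    rw [concatAt_of_ge hjoin hLs]
    exact mem_of_eq ((hβ.2.2 _ hsβ _ htβ).trans (by rw [sub_sub_sub_cancel_right]))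

end IsGeodesicFrom

theorem stmt14_general {X : Type*} [MetricSpace X] {x y z : X} {α β : ℝ → X}
    (hα : IsGeodesicFrom α x y) (hβ : IsGeodesicFrom β y z) {s t : ℝ}
    (hs : s ∈ Set.Icc 0 (dist x y + dist y z)) (ht : t ∈ Set.Icc 0 (dist x y + dist y z)) :
    dist (concatAt (dist x y) α β s) (concatAt (dist x y) α β t) ∈
      Set.Icc (|s - t| - 2 * gromovProd y x z) |s - t| := by
  wlog hst : s ≤ t generalizing s t
  · rw [dist_comm, abs_sub_comm]
    exact this ht hs (le_of_not_ge hst)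
  rw [abs_sub_comm, abs_of_nonneg (sub_nonneg.2 hst)]
  exact hα.dist_concatAt_mem_Icc_of_le hβ hs.1 hst ht.2

/-- A broken geodesic through a corner `y` with Gromov product `(x,z)_y ≤ C`
is a `(2C+δ)`-quasigeodesic, with the additive two-sided bound
`|s−t| − (2C+δ) ≤ d(γ s, γ t) ≤ |s−t|`. -/
theorem stmt14 {X : Type*} [MetricSpace X] (δ C : ℝ) (hδ : 0 ≤ δ) (hC : 0 ≤ C)
    (hgeo : IsGeodesicSpace X) (hthin : ThinTriangles X δ)
    (x y z : X) (hgp : gromovProd y x z ≤ C)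
    (α β : ℝ → X) (hα : IsGeodesicFrom α x y) (hβ : IsGeodesicFrom β y z)
    (γ : ℝ → X)
    (hγdef : ∀ s : ℝ, γ s = if s ≤ dist x y then α s else β (s - dist x y)) :
    ∀ s ∈ Set.Icc (0 : ℝ) (dist x y + dist y z),
      ∀ t ∈ Set.Icc (0 : ℝ) (dist x y + dist y z),
        |s - t| - (2 * C + δ) ≤ dist (γ s) (γ t) ∧ dist (γ s) (γ t) ≤ |s - t| := by
  obtain rfl : γ = concatAt (dist x y) α β := funext hγdef
  exact fun s hs t ht ↦ (stmt14_general hα hβ hs ht).imp_left (le_trans (by linarith))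
end

section
/- For all δ ≥ 0 and C ≥ 0 there exist constants D(δ,C) > 0 and K(δ,C) ≥ 1, depending only on δ and C, with the following property. Let X be a geodesic metric space whose geodesic triangles are δ-thin, let x₀, x₁, …, x_n ∈ X be points with d(x_{i−1}, x_i) ≥ D(δ,C) for all 1 ≤ i ≤ n and with Gromov products (x_{i−1}, x_{i+1})_{x_i} ≤ C for all 1 ≤ i ≤ n−1, and for each 1 ≤ i ≤ n let α_i be a geodesic from x_{i−1} to x_i. Then the arclength parametrization of the concatenation α₁·α₂⋯α_n is a K(δ,C)-quasigeodesic. -/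
/-!
Thin triangles imply the four-point inequality, and the four-point inequality makes smallness of
Gromov products propagate along the broken geodesic. Seen from a fixed point `p`, if the product
`(p, x_{k+1})_{x_k}` is at most `C + δ`, then `(p, x_k)_{x_{k+1}}` exceeds `C + δ`, because the two
add up to the long distance `d(x_k, x_{k+1})`. As `(x_k, x_{k+2})_{x_{k+1}} ≤ C`, the four-point
inequality then forces `(p, x_{k+2})_{x_{k+1}} ≤ C + δ`. Hence every edge of length greater than
`4 (C + δ)` moves the path away from `p` by at least half of its length.
-/

section GromovProduct

variable {X : Type*} [MetricSpace X]

lemma gromovProd_comm (w x y : X) : gromovProd w x y = gromovProd w y x := by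
  rw [gromovProd, gromovProd, dist_comm x y, add_comm (dist w x)]

lemma gromovProd_nonneg_s15 (w x y : X) : 0 ≤ gromovProd w x y := by
  rw [gromovProd]
  linarith [dist_triangle_left x y w]

lemma gromovProd_le_dist_left (w x y : X) : gromovProd w x y ≤ dist w x := by
  rw [gromovProd]
  linarith [dist_triangle w x y]

lemma gromovProd_add_gromovProd (u v p : X) :
    gromovProd u p v + gromovProd v p u = dist u v := by
  rw [gromovProd, gromovProd, dist_comm v u, dist_comm u p, dist_comm v p]
  ring

lemma gromovProd_le_gromovProd_of_dist_add_dist_eq {w q z : X}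
    (hq : dist w q + dist q z = dist w z) (p : X) : gromovProd w p q ≤ gromovProd w p z := by
  rw [gromovProd, gromovProd]
  linarith [dist_triangle p q z]

end GromovProduct

section Geodesic

variable {X : Type*} [MetricSpace X]

lemma IsGeodesicFrom.congr {α β : ℝ → X} {x y : X} (hα : IsGeodesicFrom α x y)
    (hβ : Set.EqOn β α (Set.Icc 0 (dist x y))) : IsGeodesicFrom β x y := by
  refine ⟨(hβ ⟨le_rfl, dist_nonneg⟩).trans hα.1, (hβ ⟨dist_nonneg, le_rfl⟩).trans hα.2.1,
    fun s hs t ht => ?_⟩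
  rw [hβ hs, hβ ht, hα.2.2 s hs t ht]

lemma IsGeodesicFrom.dist_apply_right {α : ℝ → X} {x y : X} (hα : IsGeodesicFrom α x y) {t : ℝ}
    (ht : t ∈ Set.Icc 0 (dist x y)) : dist (α t) y = dist x y - t := by
  have h := hα.2.2 t ht (dist x y) ⟨dist_nonneg, le_rfl⟩
  rwa [hα.2.1, abs_sub_comm, abs_of_nonneg (sub_nonneg.2 ht.2)] at h

end Geodesic

section Hyperbolic

variable {X : Type*} [MetricSpace X]

/-- Gromov's four-point condition with constant `δ`. It makes sense in spaces without geodesics,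
and it is the only form in which hyperbolicity enters the argument. -/
def IsGromovHyperbolic (X : Type*) [MetricSpace X] (δ : ℝ) : Prop :=
  ∀ w x y z : X, min (gromovProd w x y) (gromovProd w y z) - δ ≤ gromovProd w x z

-- Travel the common time `t = min (x,y)_w (y,z)_w` along geodesics from `w` to `x`, `y` and `z`:
-- the points reached towards `x` and `z` are both `δ`-close to the one reached towards `y`.
theorem ThinTriangles.isGromovHyperbolic {δ : ℝ} (hthin : ThinTriangles X δ)
    (hgeod : IsGeodesicSpace X) : IsGromovHyperbolic X δ := by
  intro w x y z
  obtain ⟨a, ha⟩ := hgeod w x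
  obtain ⟨b, hb⟩ := hgeod w y
  obtain ⟨c, hc⟩ := hgeod w z
  set t := min (gromovProd w x y) (gromovProd w y z)
  have t_nonneg : 0 ≤ t := le_min (gromovProd_nonneg_s15 w x y) (gromovProd_nonneg_s15 w y z)
  have t_le_xy : t ≤ gromovProd w x y := min_le_left _ _
  have t_le_yz : t ≤ gromovProd w y z := min_le_right _ _
  have t_le_x : t ≤ dist w x := t_le_xy.trans (gromovProd_le_dist_left w x y)
  have t_le_z : t ≤ dist w z :=
    t_le_yz.trans (gromovProd_comm w y z ▸ gromovProd_le_dist_left w z y)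
  have hab : dist (a t) (b t) ≤ δ := hthin x w y a b ha hb t t_nonneg t_le_xy
  have hbc : dist (b t) (c t) ≤ δ := hthin y w z b c hb hc t t_nonneg t_le_yz
  have hxz : dist x z ≤ (dist w x - t) + (δ + δ) + (dist w z - t) := calc
    dist x z ≤ dist x (a t) + dist (a t) (c t) + dist (c t) z := dist_triangle4 _ _ _ _
    _ ≤ (dist w x - t) + (δ + δ) + (dist w z - t) := by
      rw [dist_comm x, ha.dist_apply_right ⟨t_nonneg, t_le_x⟩,
        hc.dist_apply_right ⟨t_nonneg, t_le_z⟩]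
      gcongr
      exact (dist_triangle _ (b t) _).trans (add_le_add hab hbc)
  rw [gromovProd]
  linarith

variable {δ C : ℝ} {x : ℕ → X} {i j : ℕ}

lemma IsGromovHyperbolic.gromovProd_le_of_lt_dist (hX : IsGromovHyperbolic X δ) {p u v w : X}
    (hu : gromovProd u p v ≤ C + δ) (huv : 2 * (C + δ) < dist u v)
    (hv : gromovProd v u w ≤ C) : gromovProd v p w ≤ C + δ := by
  have far : C + δ < gromovProd v u p := by
    rw [gromovProd_comm]
    linarith [gromovProd_add_gromovProd u v p]
  have small : min (gromovProd v u p) (gromovProd v p w) ≤ C + δ := by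
    linarith [hX v u p w]
  exact (min_le_iff.1 small).resolve_left far.not_ge

lemma IsGromovHyperbolic.gromovProd_chain_le (hX : IsGromovHyperbolic X δ) {p : X} (hij : i ≤ j)
    (hp : gromovProd (x i) p (x (i + 1)) ≤ C + δ)
    (hedge : ∀ k ∈ Set.Ico i j, 2 * (C + δ) < dist (x k) (x (k + 1)))
    (hcorner : ∀ k ∈ Set.Ico i j, gromovProd (x (k + 1)) (x k) (x (k + 2)) ≤ C) :
    gromovProd (x j) p (x (j + 1)) ≤ C + δ := by
  induction j, hij using Nat.le_induction with
  | base => exact hp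
  | succ j hij ih =>
    have hj : j ∈ Set.Ico i (j + 1) := ⟨hij, j.lt_succ_self⟩
    have hsub : Set.Ico i j ⊆ Set.Ico i (j + 1) := Set.Ico_subset_Ico_right j.le_succ
    have hprev := ih (fun k hk => hedge k (hsub hk)) (fun k hk => hcorner k (hsub hk))
    exact hX.gromovProd_le_of_lt_dist hprev (hedge j hj) (hcorner j hj)

end Hyperbolic

section PolygonalPath

variable {X : Type*} [MetricSpace X] {δ C : ℝ} {x : ℕ → X} {i j n : ℕ}

/-- The length of the polygonal path with vertices `x 0, …, x i`, which is the arclength parameter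
at which the path reaches the vertex `x i`. -/
noncomputable def polygonalLength (x : ℕ → X) (i : ℕ) : ℝ :=
  ∑ j ∈ Finset.range i, dist (x j) (x (j + 1))

lemma polygonalLength_zero (x : ℕ → X) : polygonalLength x 0 = 0 :=
  Finset.sum_range_zero _

lemma polygonalLength_succ (x : ℕ → X) (i : ℕ) :
    polygonalLength x (i + 1) = polygonalLength x i + dist (x i) (x (i + 1)) :=
  Finset.sum_range_succ _ _

lemma dist_le_polygonalLength_sub (x : ℕ → X) (hij : i ≤ j) :
    dist (x i) (x j) ≤ polygonalLength x j - polygonalLength x i :=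
  (dist_le_Ico_sum_dist x hij).trans_eq (Finset.sum_Ico_eq_sub _ hij)

lemma dist_add_half_polygonalLength_le {B : ℝ} {p : X} (hij : i ≤ j)
    (hprod : ∀ k ∈ Set.Ico i j, gromovProd (x k) p (x (k + 1)) ≤ B)
    (hedge : ∀ k ∈ Set.Ico i j, 4 * B ≤ dist (x k) (x (k + 1))) :
    dist p (x i) + (polygonalLength x j - polygonalLength x i) / 2 ≤ dist p (x j) := by
  induction j, hij using Nat.le_induction with
  | base => simp
  | succ j hij ih =>
    have hj : j ∈ Set.Ico i (j + 1) := ⟨hij, j.lt_succ_self⟩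
    have hsub : Set.Ico i j ⊆ Set.Ico i (j + 1) := Set.Ico_subset_Ico_right j.le_succ
    have hprev := ih (fun k hk => hprod k (hsub hk)) (fun k hk => hedge k (hsub hk))
    have hlast := hprod j hj
    rw [gromovProd, dist_comm _ p] at hlast
    linarith [hedge j hj, polygonalLength_succ x j]

theorem IsGromovHyperbolic.half_polygonalLength_le_dist (hX : IsGromovHyperbolic X δ) (hδ : 0 ≤ δ)
    (hedge : ∀ k < n, 4 * (C + δ) < dist (x k) (x (k + 1)))
    (hcorner : ∀ k, k + 1 < n → gromovProd (x (k + 1)) (x k) (x (k + 2)) ≤ C)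
    (hij : i < j) (hjn : j < n) {p q : X}
    (hp : dist (x i) p + dist p (x (i + 1)) = dist (x i) (x (i + 1)))
    (hq : dist (x j) q + dist q (x (j + 1)) = dist (x j) (x (j + 1))) :
    dist p (x (i + 1)) + (polygonalLength x j - polygonalLength x (i + 1)) / 2 + dist (x j) q
      - 2 * (C + δ) ≤ dist p q := by
  have hstart : gromovProd (x (i + 1)) p (x (i + 2)) ≤ C + δ := calc
    gromovProd (x (i + 1)) p (x (i + 2)) = gromovProd (x (i + 1)) (x (i + 2)) p :=
      gromovProd_comm _ _ _
    _ ≤ gromovProd (x (i + 1)) (x (i + 2)) (x i) :=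
      gromovProd_le_gromovProd_of_dist_add_dist_eq
        (by rw [dist_comm _ p, dist_comm p (x i), dist_comm _ (x i), add_comm, hp]) _
    _ = gromovProd (x (i + 1)) (x i) (x (i + 2)) := gromovProd_comm _ _ _
    _ ≤ C + δ := by linarith [hcorner i (by lia)]
  have hprod : ∀ k, i + 1 ≤ k → k ≤ j → gromovProd (x k) p (x (k + 1)) ≤ C + δ := by
    intro k hik hkj
    refine hX.gromovProd_chain_le hik hstart (fun l hl => ?_) (fun l hl => hcorner l ?_)
    · linarith [hedge l (by grind), dist_nonneg (x := x l) (y := x (l + 1))]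
    · grind
  have hvertex : dist p (x (i + 1)) + (polygonalLength x j - polygonalLength x (i + 1)) / 2
      ≤ dist p (x j) :=
    dist_add_half_polygonalLength_le hij (fun k hk => hprod k hk.1 hk.2.le)
      (fun k hk => (hedge k (hk.2.trans hjn)).le)
  have hend : gromovProd (x j) p q ≤ C + δ :=
    (gromovProd_le_gromovProd_of_dist_add_dist_eq hq p).trans (hprod j hij le_rfl)
  rw [gromovProd, dist_comm _ p] at hend
  linarith

end PolygonalPath

section BrokenGeodesic

variable {X : Type*} [MetricSpace X]

/-- `γ` is the arclength parametrization of a broken geodesic with vertices `x 0, …, x n`: after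
shifting the parameter, each of its `n` pieces is a geodesic between consecutive vertices. -/
def IsBrokenGeodesic (γ : ℝ → X) (x : ℕ → X) (n : ℕ) : Prop :=
  ∀ i < n, IsGeodesicFrom (fun t => γ (polygonalLength x i + t)) (x i) (x (i + 1))

/-- `γ` is a `K`-quasigeodesic on the parameter set `I`. -/
def IsQuasigeodesicOn (γ : ℝ → X) (K : ℝ) (I : Set ℝ) : Prop :=
  ∀ s ∈ I, ∀ t ∈ I, (1 / K) * |s - t| - K ≤ dist (γ s) (γ t) ∧ dist (γ s) (γ t) ≤ K * |s - t| + K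

lemma exists_lt_mem_Icc_succ {α : Type*} [LinearOrder α] {f : ℕ → α} {a : α} {n : ℕ} (hn : 0 < n)
    (ha : a ∈ Set.Icc (f 0) (f n)) : ∃ i < n, a ∈ Set.Icc (f i) (f (i + 1)) := by
  induction n, hn using Nat.le_induction with
  | base => exact ⟨0, one_pos, ha⟩
  | succ n _ ih =>
    rcases le_total a (f n) with han | han
    · obtain ⟨i, hi, hai⟩ := ih ⟨ha.1, han⟩
      exact ⟨i, hi.trans n.lt_succ_self, hai⟩
    · exact ⟨n, n.lt_succ_self, han, ha.2⟩

namespace IsBrokenGeodesic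

variable {δ C : ℝ} {γ : ℝ → X} {x : ℕ → X} {i j n : ℕ} {s t : ℝ}

lemma apply_polygonalLength (hγ : IsBrokenGeodesic γ x n) (hi : i < n) :
    γ (polygonalLength x i) = x i := by
  simpa only [add_zero] using (hγ i hi).1

lemma apply_polygonalLength_succ (hγ : IsBrokenGeodesic γ x n) (hi : i < n) :
    γ (polygonalLength x (i + 1)) = x (i + 1) := by
  simpa only [polygonalLength_succ] using (hγ i hi).2.1

lemma dist_eq_sub (hγ : IsBrokenGeodesic γ x n) (hi : i < n) (hs : polygonalLength x i ≤ s)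
    (hst : s ≤ t) (ht : t ≤ polygonalLength x (i + 1)) : dist (γ s) (γ t) = t - s := by
  rw [polygonalLength_succ] at ht
  have h : dist (γ (polygonalLength x i + (s - polygonalLength x i)))
      (γ (polygonalLength x i + (t - polygonalLength x i))) = _ :=
    (hγ i hi).2.2 _ ⟨by linarith, by linarith⟩ _ ⟨by linarith, by linarith⟩
  rwa [add_sub_cancel, add_sub_cancel, sub_sub_sub_cancel_right, abs_sub_comm,
    abs_of_nonneg (sub_nonneg.2 hst)] at h

lemma dist_vertex_left (hγ : IsBrokenGeodesic γ x n) (hi : i < n)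
    (hs : s ∈ Set.Icc (polygonalLength x i) (polygonalLength x (i + 1))) :
    dist (x i) (γ s) = s - polygonalLength x i := by
  rw [← hγ.apply_polygonalLength hi, hγ.dist_eq_sub hi le_rfl hs.1 hs.2]

lemma dist_vertex_right (hγ : IsBrokenGeodesic γ x n) (hi : i < n)
    (hs : s ∈ Set.Icc (polygonalLength x i) (polygonalLength x (i + 1))) :
    dist (γ s) (x (i + 1)) = polygonalLength x (i + 1) - s := by
  rw [← hγ.apply_polygonalLength_succ hi, hγ.dist_eq_sub hi hs.1 hs.2 le_rfl]

lemma dist_vertices_eq_add (hγ : IsBrokenGeodesic γ x n) (hi : i < n)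
    (hs : s ∈ Set.Icc (polygonalLength x i) (polygonalLength x (i + 1))) :
    dist (x i) (γ s) + dist (γ s) (x (i + 1)) = dist (x i) (x (i + 1)) := by
  linarith [hγ.dist_vertex_left hi hs, hγ.dist_vertex_right hi hs, polygonalLength_succ x i]

lemma dist_le_of_lt (hγ : IsBrokenGeodesic γ x n) (hij : i < j) (hjn : j < n)
    (hs : s ∈ Set.Icc (polygonalLength x i) (polygonalLength x (i + 1)))
    (ht : t ∈ Set.Icc (polygonalLength x j) (polygonalLength x (j + 1))) :
    dist (γ s) (γ t) ≤ t - s := calc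
  dist (γ s) (γ t) ≤ dist (γ s) (x (i + 1)) + dist (x (i + 1)) (x j) + dist (x j) (γ t) :=
    dist_triangle4 _ _ _ _
  _ ≤ (polygonalLength x (i + 1) - s) + (polygonalLength x j - polygonalLength x (i + 1))
      + (t - polygonalLength x j) := by
    rw [hγ.dist_vertex_right (hij.trans hjn) hs, hγ.dist_vertex_left hjn ht]
    gcongr
    exact dist_le_polygonalLength_sub x hij
  _ = t - s := by ring

lemma half_sub_le_dist_of_lt (hγ : IsBrokenGeodesic γ x n) (hX : IsGromovHyperbolic X δ)
    (hδ : 0 ≤ δ) (hedge : ∀ k < n, 4 * (C + δ) < dist (x k) (x (k + 1)))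
    (hcorner : ∀ k, k + 1 < n → gromovProd (x (k + 1)) (x k) (x (k + 2)) ≤ C)
    (hij : i < j) (hjn : j < n)
    (hs : s ∈ Set.Icc (polygonalLength x i) (polygonalLength x (i + 1)))
    (ht : t ∈ Set.Icc (polygonalLength x j) (polygonalLength x (j + 1))) :
    (t - s) / 2 - 2 * (C + δ) ≤ dist (γ s) (γ t) := by
  have hin : i < n := hij.trans hjn
  have h := hX.half_polygonalLength_le_dist hδ hedge hcorner hij hjn
    (hγ.dist_vertices_eq_add hin hs) (hγ.dist_vertices_eq_add hjn ht)
  rw [hγ.dist_vertex_right hin hs, hγ.dist_vertex_left hjn ht] at h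
  linarith [hs.2, ht.1]

theorem dist_bounds (hγ : IsBrokenGeodesic γ x n) (hX : IsGromovHyperbolic X δ)
    (hδ : 0 ≤ δ) (hC : 0 ≤ C) (hedge : ∀ k < n, 4 * (C + δ) < dist (x k) (x (k + 1)))
    (hcorner : ∀ k, k + 1 < n → gromovProd (x (k + 1)) (x k) (x (k + 2)) ≤ C)
    (hs : 0 ≤ s) (hst : s ≤ t) (ht : t ≤ polygonalLength x n) :
    (t - s) / 2 - 2 * (C + δ) ≤ dist (γ s) (γ t) ∧ dist (γ s) (γ t) ≤ t - s := by
  rcases n.eq_zero_or_pos with rfl | hn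
  · obtain rfl : s = t := by linarith [polygonalLength_zero x]
    rw [dist_self]
    constructor <;> linarith
  have hs₀ : polygonalLength x 0 ≤ s := by rwa [polygonalLength_zero]
  obtain ⟨j, hjn, htj⟩ := exists_lt_mem_Icc_succ hn ⟨hs₀.trans hst, ht⟩
  obtain ⟨i, hij, hsi⟩ := exists_lt_mem_Icc_succ j.succ_pos ⟨hs₀, hst.trans htj.2⟩
  rcases (Nat.lt_succ_iff.1 hij).eq_or_lt with rfl | hij
  · rw [hγ.dist_eq_sub hjn hsi.1 hst htj.2]
    constructor <;> linarith
  · exact ⟨hγ.half_sub_le_dist_of_lt hX hδ hedge hcorner hij hjn hsi htj,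
      hγ.dist_le_of_lt hij hjn hsi htj⟩

end IsBrokenGeodesic

theorem stmt15_general {δ C : ℝ} (hδ : 0 ≤ δ) (hC : 0 ≤ C) (hX : IsGromovHyperbolic X δ)
    {γ : ℝ → X} {x : ℕ → X} {n : ℕ} (hγ : IsBrokenGeodesic γ x n)
    (hedge : ∀ k < n, 4 * (C + δ) < dist (x k) (x (k + 1)))
    (hcorner : ∀ k, k + 1 < n → gromovProd (x (k + 1)) (x k) (x (k + 2)) ≤ C) :
    IsQuasigeodesicOn γ (2 * (C + δ) + 2) (Set.Icc 0 (polygonalLength x n)) := by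
  intro s hs t ht
  wlog hst : s ≤ t generalizing s t
  · rw [abs_sub_comm, dist_comm]
    exact this t ht s hs (le_of_not_ge hst)
  obtain ⟨hlower, hupper⟩ := hγ.dist_bounds hX hδ hC hedge hcorner hs.1 hst ht.2
  rw [abs_sub_comm, abs_of_nonneg (sub_nonneg.2 hst)]
  have hslope : 1 / (2 * (C + δ) + 2) * (t - s) ≤ 1 / 2 * (t - s) := by
    have : 0 ≤ t - s := sub_nonneg.2 hst
    gcongr
    linarith
  have hscale : 1 * (t - s) ≤ (2 * (C + δ) + 2) * (t - s) :=
    mul_le_mul_of_nonneg_right (by linarith) (sub_nonneg.2 hst)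
  constructor <;> linarith

end BrokenGeodesic

/-- Local-to-global for broken geodesics: if consecutive points are at
distance at least `D(δ,C)` and the Gromov products at the corners are at most
`C`, then the arclength parametrization of the concatenation of the geodesic
segments is a `K(δ,C)`-quasigeodesic. -/
theorem stmt15 (δ C : ℝ) (hδ : 0 ≤ δ) (hC : 0 ≤ C) :
    ∃ D K : ℝ, 0 < D ∧ 1 ≤ K ∧
      ∀ (X : Type*) [MetricSpace X], IsGeodesicSpace X → ThinTriangles X δ →
        ∀ (n : ℕ) (x : ℕ → X) (α : ℕ → ℝ → X),
          (∀ i : ℕ, i < n → D ≤ dist (x i) (x (i + 1))) →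
          (∀ i : ℕ, 1 ≤ i → i + 1 ≤ n →
              gromovProd (x i) (x (i - 1)) (x (i + 1)) ≤ C) →
          (∀ i : ℕ, i < n → IsGeodesicFrom (α i) (x i) (x (i + 1))) →
          ∀ γ : ℝ → X,
            (∀ i : ℕ, i < n → ∀ t ∈ Set.Icc (0 : ℝ) (dist (x i) (x (i + 1))),
                γ ((∑ j ∈ Finset.range i, dist (x j) (x (j + 1))) + t) = α i t) →
            ∀ s ∈ Set.Icc (0 : ℝ) (∑ j ∈ Finset.range n, dist (x j) (x (j + 1))),
              ∀ t ∈ Set.Icc (0 : ℝ) (∑ j ∈ Finset.range n, dist (x j) (x (j + 1))),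
                (1 / K) * |s - t| - K ≤ dist (γ s) (γ t) ∧
                dist (γ s) (γ t) ≤ K * |s - t| + K := by
  refine ⟨4 * (C + δ) + 1, 2 * (C + δ) + 2, by linarith, by linarith, ?_⟩
  intro X _ hgeod hthin n x α hedge hcorner hα γ hγ
  exact stmt15_general hδ hC (hthin.isGromovHyperbolic hgeod)
    (fun i hi => (hα i hi).congr (hγ i hi)) (fun i hi => by linarith [hedge i hi])
    (fun i hi => hcorner (i + 1) i.succ_pos hi)
end
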